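/- Let J ≥ 1, v₀,…,v_J ∈ ℝ, and let ε = (ε₁,…,ε_J) be a random vector on ℝ^J with density Σ_{k=1}^m ω_k φ(·; μ_k, σ_k), where m ≥ 1, ω_k > 0 with Σ_{k=1}^m ω_k = 1, μ_k ∈ ℝ^J and σ_k > 0; set ε₀ = 0. Define A_k = log Σ_{j=1}^J exp((v_j + μ_{jk})/σ_k) and a_k = v₀/σ_k + γ − A_k. Then E[max_{j=0,1,…,J} (v_j + ε_j)] = Σ_{k=1}^m ω_k σ_k [A_k + E1(e^{−a_k})]. -/

import Mathlib

open MeasureTheory Real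

/-- The standardized univariate Gumbel density `φ(z) = exp(−z − γ − e^{−(z+γ)})`. -/
noncomputable def gumbelPdf (z : ℝ) : ℝ :=
  Real.exp (-z - Real.eulerMascheroniConstant - Real.exp (-(z + Real.eulerMascheroniConstant)))

/-- The multivariate Gumbel density `φ(z; μ, σ) = ∏_j (1/σ) φ((z_j − μ_j)/σ)`. -/
noncomputable def mGumbelPdf {J : ℕ} (μ : Fin J → ℝ) (σ : ℝ) (z : Fin J → ℝ) : ℝ :=
  ∏ j, (1 / σ) * gumbelPdf ((z j - μ j) / σ)

/-- The exponential integral `E1(z) = ∫_z^∞ e^{−t}/t dt`. -/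
noncomputable def E1 (z : ℝ) : ℝ := ∫ t in Set.Ioi z, Real.exp (-t) / t

open Set Filter Topology

theorem integral_log_mul_exp_neg_Ioi :
    ∫ t in Ioi (0 : ℝ), Real.log t * Real.exp (-t) = -Real.eulerMascheroniConstant := by
  have h := Complex.hasDerivAt_GammaIntegral (s := 1) (by simp)
  have h1 : HasDerivAt Complex.GammaIntegral (-(Real.eulerMascheroniConstant : ℂ)) 1 := by
    refine Complex.hasDerivAt_Gamma_one.congr_of_eventuallyEq ?_
    filter_upwards [(isOpen_lt continuous_const Complex.continuous_re).mem_nhds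
      (show (0 : ℝ) < (1 : ℂ).re by simp)] with z hz
    exact (Complex.Gamma_eq_integral hz).symm
  have h2 := h.unique h1
  simp only [sub_self, Complex.cpow_zero, one_mul, ← Complex.ofReal_mul] at h2
  rw [integral_complex_ofReal] at h2
  exact_mod_cast h2

theorem integrableOn_log_mul_exp_neg_Ioi :
    IntegrableOn (fun t : ℝ => Real.log t * Real.exp (-t)) (Ioi 0) := by
  refine Integrable.of_integral_ne_zero ?_
  rw [integral_log_mul_exp_neg_Ioi]
  have := Real.one_half_lt_eulerMascheroniConstant
  linarith

theorem integral_log_sub_log_mul_exp_neg_Ioi {s : ℝ} (hs : 0 < s) :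
    ∫ t in Ioi s, (Real.log t - Real.log s) * Real.exp (-t) = E1 s := by
  have hexp : IntegrableOn (fun t : ℝ => Real.exp (-t)) (Ioi s) := integrableOn_exp_neg_Ioi s
  have hint1 : IntegrableOn (fun t : ℝ => (Real.log t - Real.log s) * Real.exp (-t)) (Ioi s) := by
    have := (integrableOn_log_mul_exp_neg_Ioi.mono_set (Ioi_subset_Ioi hs.le)).sub
      (hexp.const_mul (Real.log s))
    refine this.congr_fun (fun t _ => ?_) measurableSet_Ioi
    simp [sub_mul]
  have hint2 : IntegrableOn (fun t : ℝ => Real.exp (-t) / t) (Ioi s) := by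
    refine Integrable.mono' (hexp.const_mul s⁻¹)
      (by measurability : Measurable _).aestronglyMeasurable ?_
    filter_upwards [self_mem_ae_restrict measurableSet_Ioi] with t ht
    have ht' : s < t := ht
    rw [Real.norm_of_nonneg (div_nonneg (Real.exp_nonneg _) (hs.trans ht').le),
      div_eq_inv_mul]
    gcongr
  have hlim : Tendsto (fun t : ℝ => -((Real.log t - Real.log s) * Real.exp (-t))) atTop (𝓝 0) := by
    have h0 : Tendsto (fun t : ℝ => Real.exp (-t)) atTop (𝓝 0) := Real.tendsto_exp_neg_atTop_nhds_zero
    have h1 : Tendsto (fun t : ℝ => t * Real.exp (-t)) atTop (𝓝 0) := by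
      simpa using Real.tendsto_pow_mul_exp_neg_atTop_nhds_zero 1
    have h2 : Tendsto (fun t : ℝ => Real.log t * Real.exp (-t)) atTop (𝓝 0) := by
      refine squeeze_zero' ?_ ?_ h1
      · filter_upwards [eventually_ge_atTop 1] with t ht
        exact mul_nonneg (Real.log_nonneg ht) (Real.exp_nonneg _)
      · filter_upwards [eventually_ge_atTop 1] with t ht
        have := Real.log_le_self (zero_le_one.trans ht)
        gcongr
    have := (h2.sub (h0.const_mul (Real.log s))).neg
    simpa [sub_mul] using this
  have hderiv : ∀ t ∈ Ici s, HasDerivAt (fun t : ℝ => -((Real.log t - Real.log s) * Real.exp (-t)))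
      ((Real.log t - Real.log s) * Real.exp (-t) - Real.exp (-t) / t) t := by
    intro t ht
    have ht0 : t ≠ 0 := (hs.trans_le ht).ne'
    have := (((Real.hasDerivAt_log ht0).sub_const (Real.log s)).mul
      ((hasDerivAt_neg t).exp)).neg
    refine this.congr_deriv ?_
    field_simp
    ring
  have h := integral_Ioi_of_hasDerivAt_of_tendsto' hderiv (hint1.sub hint2) hlim
  rw [integral_sub hint1 hint2] at h
  simp only [sub_self, zero_mul, neg_zero] at h
  rw [E1]
  linarith

theorem integrableOn_min_log_mul_exp_neg_Ioi (c : ℝ) :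
    IntegrableOn (fun t : ℝ => min (Real.log t) c * Real.exp (-t)) (Ioi 0) := by
  refine (Integrable.inf integrableOn_log_mul_exp_neg_Ioi
    ((integrableOn_exp_neg_Ioi 0).const_mul c)).congr (.of_forall fun t => ?_)
  exact (min_mul_of_nonneg _ _ (Real.exp_nonneg _)).symm

theorem integral_min_log_mul_exp_neg_Ioi {s : ℝ} (hs : 0 < s) :
    ∫ t in Ioi (0 : ℝ), min (Real.log t) (Real.log s) * Real.exp (-t) =
      -Real.eulerMascheroniConstant - E1 s := by
  have hsub : ∫ t in Ioi (0 : ℝ), (Real.log t * Real.exp (-t)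
      - min (Real.log t) (Real.log s) * Real.exp (-t)) = E1 s := by
    rw [← integral_log_sub_log_mul_exp_neg_Ioi hs,
      setIntegral_eq_of_subset_of_forall_sdiff_eq_zero measurableSet_Ioi (Ioi_subset_Ioi hs.le)]
    · refine setIntegral_congr_fun measurableSet_Ioi fun t ht => ?_
      have : Real.log s ≤ Real.log t := Real.log_le_log hs (le_of_lt ht)
      simp [min_eq_right this, sub_mul]
    · rintro t ⟨ht0, hts⟩
      have : Real.log t ≤ Real.log s := Real.log_le_log ht0 (not_lt.1 hts)
      simp [min_eq_left this]
  rw [integral_sub integrableOn_log_mul_exp_neg_Ioi (integrableOn_min_log_mul_exp_neg_Ioi _),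
    integral_log_mul_exp_neg_Ioi] at hsub
  linarith

/-- The univariate Gumbel density with location `m` and scale `σ`. -/
noncomputable def locScaleGumbelPdf (m σ x : ℝ) : ℝ := (1 / σ) * gumbelPdf ((x - m) / σ)

/-- The substitution `x ↦ e^{-((x - m)/σ + γ)}`, which maps a Gumbel variable to a standard
exponential one. -/
noncomputable def gumbelToExp (m σ x : ℝ) : ℝ :=
  Real.exp (-((x - m) / σ + Real.eulerMascheroniConstant))

theorem gumbelToExp_pos (m σ x : ℝ) : 0 < gumbelToExp m σ x :=
  Real.exp_pos _

theorem locScaleGumbelPdf_eq (m σ x : ℝ) :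
    locScaleGumbelPdf m σ x = gumbelToExp m σ x / σ * Real.exp (-gumbelToExp m σ x) := by
  rw [locScaleGumbelPdf, gumbelPdf, gumbelToExp, sub_eq_add_neg _ (Real.exp _), Real.exp_add,
    neg_add, ← sub_eq_add_neg]
  ring

theorem locScaleGumbelPdf_nonneg {σ : ℝ} (hσ : 0 < σ) (m x : ℝ) :
    0 ≤ locScaleGumbelPdf m σ x :=
  mul_nonneg (by positivity) (Real.exp_nonneg _)

theorem continuous_locScaleGumbelPdf (m σ : ℝ) : Continuous (locScaleGumbelPdf m σ) := by
  unfold locScaleGumbelPdf gumbelPdf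
  fun_prop

theorem hasDerivAt_gumbelToExp (m σ x : ℝ) :
    HasDerivAt (gumbelToExp m σ) (-(gumbelToExp m σ x / σ)) x := by
  have := ((((hasDerivAt_id x).sub_const m).div_const σ).add_const
    Real.eulerMascheroniConstant).neg.exp
  refine this.congr_deriv ?_
  simp only [gumbelToExp, id, Pi.neg_apply]
  ring

theorem gumbelToExp_injective {σ : ℝ} (hσ : 0 < σ) (m : ℝ) :
    Function.Injective (gumbelToExp m σ) := by
  intro x y h
  have h := Real.exp_injective h
  field_simp at h
  linarith

theorem log_gumbelToExp (m σ x : ℝ) :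
    Real.log (gumbelToExp m σ x) = -((x - m) / σ + Real.eulerMascheroniConstant) :=
  Real.log_exp _

theorem image_gumbelToExp_univ {σ : ℝ} (hσ : 0 < σ) (m : ℝ) :
    gumbelToExp m σ '' univ = Ioi 0 := by
  ext t
  simp only [image_univ, mem_range, mem_Ioi]
  refine ⟨?_, fun ht => ⟨m + σ * (-Real.log t - Real.eulerMascheroniConstant), ?_⟩⟩
  · rintro ⟨x, rfl⟩
    exact gumbelToExp_pos m σ x
  · rw [gumbelToExp, add_sub_cancel_left, mul_div_cancel_left₀ _ hσ.ne', sub_add_cancel, neg_neg,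
      Real.exp_log ht]

theorem abs_deriv_gumbelToExp_smul {σ : ℝ} (hσ : 0 < σ) (m x y : ℝ) :
    |-(gumbelToExp m σ x / σ)| • (y * Real.exp (-gumbelToExp m σ x)) =
      y * locScaleGumbelPdf m σ x := by
  rw [abs_neg, abs_of_pos (div_pos (gumbelToExp_pos m σ x) hσ), locScaleGumbelPdf_eq, smul_eq_mul]
  ring

theorem integral_comp_gumbelToExp {σ : ℝ} (hσ : 0 < σ) (m : ℝ) (g : ℝ → ℝ) :
    ∫ x, g (gumbelToExp m σ x) * locScaleGumbelPdf m σ x =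
      ∫ t in Ioi 0, g t * Real.exp (-t) := by
  rw [← image_gumbelToExp_univ hσ m, integral_image_eq_integral_abs_deriv_smul MeasurableSet.univ
    (fun x _ => (hasDerivAt_gumbelToExp m σ x).hasDerivWithinAt)
    (gumbelToExp_injective hσ m).injOn]
  simp only [abs_deriv_gumbelToExp_smul hσ, Measure.restrict_univ]

theorem integrable_comp_gumbelToExp {σ : ℝ} (hσ : 0 < σ) (m : ℝ) {g : ℝ → ℝ}
    (hg : IntegrableOn (fun t => g t * Real.exp (-t)) (Ioi 0)) :
    Integrable fun x => g (gumbelToExp m σ x) * locScaleGumbelPdf m σ x := by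
  rw [← image_gumbelToExp_univ hσ m, integrableOn_image_iff_integrableOn_abs_deriv_smul
    MeasurableSet.univ (fun x _ => (hasDerivAt_gumbelToExp m σ x).hasDerivWithinAt)
    (gumbelToExp_injective hσ m).injOn] at hg
  simpa only [abs_deriv_gumbelToExp_smul hσ, integrableOn_univ] using hg

theorem integrable_locScaleGumbelPdf {σ : ℝ} (hσ : 0 < σ) (m : ℝ) :
    Integrable (locScaleGumbelPdf m σ) := by
  simpa using integrable_comp_gumbelToExp hσ m (g := fun _ => 1)
    (by simpa using integrableOn_exp_neg_Ioi 0)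

theorem setIntegral_Iic_locScaleGumbelPdf {σ : ℝ} (hσ : 0 < σ) (m x : ℝ) :
    ∫ y in Iic x, locScaleGumbelPdf m σ y = Real.exp (-gumbelToExp m σ x) := by
  have hlim : Tendsto (fun y => Real.exp (-gumbelToExp m σ y)) atBot (𝓝 0) := by
    refine Real.tendsto_exp_neg_atTop_nhds_zero.comp (Real.tendsto_exp_atTop.comp ?_)
    refine tendsto_neg_atBot_atTop.comp (tendsto_atBot_add_const_right _ _ ?_)
    exact (tendsto_atBot_add_const_right _ (-m) tendsto_id).atBot_div_const hσ
  have h := integral_Iic_of_hasDerivAt_of_tendsto' (a := x) (f' := locScaleGumbelPdf m σ)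
    (fun y _ => (hasDerivAt_gumbelToExp m σ y).neg.exp.congr_deriv ?_)
    (integrable_locScaleGumbelPdf hσ m).integrableOn hlim
  · simpa using h
  · rw [locScaleGumbelPdf_eq]
    simp only [Pi.neg_apply]
    ring

/-- The law of a Gumbel variable with location `m` and scale `σ`. -/
noncomputable def gumbelMeasure (m σ : ℝ) : Measure ℝ :=
  volume.withDensity fun x => ENNReal.ofReal (locScaleGumbelPdf m σ x)

theorem gumbelMeasure_Iic {σ : ℝ} (hσ : 0 < σ) (m x : ℝ) :
    gumbelMeasure m σ (Iic x) = ENNReal.ofReal (Real.exp (-gumbelToExp m σ x)) := by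
  rw [gumbelMeasure, withDensity_apply _ measurableSet_Iic,
    ← ofReal_integral_eq_lintegral_ofReal (integrable_locScaleGumbelPdf hσ m).integrableOn
      (.of_forall (locScaleGumbelPdf_nonneg hσ m)),
    setIntegral_Iic_locScaleGumbelPdf hσ]

/-- The joint law of independent Gumbel variables with locations `μ j` and scale `σ`. -/
noncomputable def mGumbelMeasure {J : ℕ} (μ : Fin J → ℝ) (σ : ℝ) : Measure (Fin J → ℝ) :=
  volume.withDensity fun z => ENNReal.ofReal (mGumbelPdf μ σ z)

theorem mGumbelPdf_nonneg {J : ℕ} (μ : Fin J → ℝ) {σ : ℝ} (hσ : 0 < σ) (z : Fin J → ℝ) :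
    0 ≤ mGumbelPdf μ σ z :=
  Finset.prod_nonneg fun j _ => locScaleGumbelPdf_nonneg hσ (μ j) (z j)

theorem continuous_mGumbelPdf {J : ℕ} (μ : Fin J → ℝ) (σ : ℝ) : Continuous (mGumbelPdf μ σ) :=
  continuous_finsetProd _ fun j _ => (continuous_locScaleGumbelPdf (μ j) σ).comp
    (continuous_apply j)

theorem integrable_mGumbelPdf {J : ℕ} (μ : Fin J → ℝ) {σ : ℝ} (hσ : 0 < σ) :
    Integrable (mGumbelPdf μ σ) :=
  Integrable.fintype_prod fun j => integrable_locScaleGumbelPdf hσ (μ j)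

theorem mGumbelMeasure_pi_Iic {J : ℕ} (μ : Fin J → ℝ) {σ : ℝ} (hσ : 0 < σ) (x : Fin J → ℝ) :
    mGumbelMeasure μ σ (univ.pi fun j => Iic (x j)) =
      ENNReal.ofReal (Real.exp (-∑ j, gumbelToExp (μ j) σ (x j))) := by
  rw [mGumbelMeasure, withDensity_apply _ (MeasurableSet.univ_pi fun _ => measurableSet_Iic),
    ← ofReal_integral_eq_lintegral_ofReal (integrable_mGumbelPdf μ hσ).integrableOn
      (.of_forall (mGumbelPdf_nonneg μ hσ)), volume_pi, Measure.restrict_pi_pi,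
    ← Finset.sum_neg_distrib, Real.exp_sum]
  congr 1
  refine (integral_fintype_prod_eq_prod fun j => locScaleGumbelPdf (μ j) σ).trans ?_
  exact Finset.prod_congr rfl fun j _ => setIntegral_Iic_locScaleGumbelPdf hσ _ _

theorem measurable_sup'_add {J : ℕ} [Nonempty (Fin J)] (u : Fin J → ℝ) :
    Measurable fun z : Fin J → ℝ => Finset.univ.sup' Finset.univ_nonempty fun j => u j + z j :=
  (Continuous.finset_sup'_apply _ fun j _ => by fun_prop).measurable

/-- The maximum of shifted independent Gumbel variables with a common scale is Gumbel. -/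
theorem map_sup'_mGumbelMeasure {J : ℕ} [Nonempty (Fin J)] (u μ : Fin J → ℝ) {σ : ℝ}
    (hσ : 0 < σ) :
    (mGumbelMeasure μ σ).map
        (fun z => Finset.univ.sup' Finset.univ_nonempty fun j => u j + z j) =
      gumbelMeasure (σ * Real.log (∑ j, Real.exp ((u j + μ j) / σ))) σ := by
  have : IsFiniteMeasure (mGumbelMeasure μ σ) :=
    isFiniteMeasure_withDensity_ofReal (integrable_mGumbelPdf μ hσ).2
  refine Measure.ext_of_Iic _ _ fun x => ?_
  have hpre : (fun z : Fin J → ℝ => Finset.univ.sup' Finset.univ_nonempty fun j => u j + z j) ⁻¹'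
      Iic x = univ.pi fun j => Iic (x - u j) := by
    ext z
    simp [Pi.le_def, le_sub_iff_add_le']
  have hpos : 0 < ∑ j, Real.exp ((u j + μ j) / σ) :=
    Finset.sum_pos (fun _ _ => Real.exp_pos _) Finset.univ_nonempty
  rw [Measure.map_apply (measurable_sup'_add u) measurableSet_Iic, hpre, mGumbelMeasure_pi_Iic μ hσ,
    gumbelMeasure_Iic hσ]
  have hexp : gumbelToExp (σ * Real.log (∑ j, Real.exp ((u j + μ j) / σ))) σ x =
      (∑ j, Real.exp ((u j + μ j) / σ)) * Real.exp (-(x / σ + Real.eulerMascheroniConstant)) := by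
    conv_rhs => rw [← Real.exp_log hpos, ← Real.exp_add]
    rw [gumbelToExp, sub_div, mul_div_cancel_left₀ _ hσ.ne']
    ring_nf
  rw [hexp, Finset.sum_mul]
  congr 3
  refine Finset.sum_congr rfl fun j _ => ?_
  rw [gumbelToExp, ← Real.exp_add]
  ring_nf

theorem max_eq_min_log_gumbelToExp {σ : ℝ} (hσ : 0 < σ) (c A x : ℝ) :
    max c x = σ * (A - Real.eulerMascheroniConstant) - σ * min
      (Real.log (gumbelToExp (σ * A) σ x)) (-(c / σ + Real.eulerMascheroniConstant - A)) := by
  have h1 : x = σ * (A - Real.eulerMascheroniConstant)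
      - σ * Real.log (gumbelToExp (σ * A) σ x) := by
    rw [log_gumbelToExp]
    field_simp
    ring
  have h2 : c = σ * (A - Real.eulerMascheroniConstant)
      - σ * -(c / σ + Real.eulerMascheroniConstant - A) := by
    field_simp
    ring
  conv_lhs => rw [h1, h2]
  rw [max_comm, mul_min_of_nonneg _ _ hσ.le, max_sub_sub_left]

theorem integrable_max_gumbelMeasure {σ : ℝ} (hσ : 0 < σ) (c A : ℝ) :
    Integrable (fun x => max c x) (gumbelMeasure (σ * A) σ) := by
  rw [gumbelMeasure, integrable_withDensity_iff_integrable_smul'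
    (continuous_locScaleGumbelPdf _ _).measurable.ennreal_ofReal (by simp)]
  have h := ((integrable_locScaleGumbelPdf hσ (σ * A)).const_mul
    (σ * (A - Real.eulerMascheroniConstant))).sub ((integrable_comp_gumbelToExp hσ (σ * A)
      (integrableOn_min_log_mul_exp_neg_Ioi
        (-(c / σ + Real.eulerMascheroniConstant - A)))).const_mul σ)
  refine h.congr (.of_forall fun x => ?_)
  simp only [Pi.sub_apply, ENNReal.toReal_ofReal (locScaleGumbelPdf_nonneg hσ _ x), smul_eq_mul]
  rw [max_eq_min_log_gumbelToExp hσ c A x]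
  ring

theorem integral_max_gumbelMeasure {σ : ℝ} (hσ : 0 < σ) (c A : ℝ) :
    ∫ x, max c x ∂gumbelMeasure (σ * A) σ =
      σ * (A + E1 (Real.exp (-(c / σ + Real.eulerMascheroniConstant - A)))) := by
  rw [gumbelMeasure, integral_withDensity_eq_integral_toReal_smul
    (continuous_locScaleGumbelPdf _ _).measurable.ennreal_ofReal (by simp)]
  have hmin := integrable_comp_gumbelToExp hσ (σ * A)
    (integrableOn_min_log_mul_exp_neg_Ioi (-(c / σ + Real.eulerMascheroniConstant - A)))
  have hone : ∫ x, locScaleGumbelPdf (σ * A) σ x = 1 := by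
    simpa only [one_mul, integral_exp_neg_Ioi_zero] using
      integral_comp_gumbelToExp hσ (σ * A) fun _ => 1
  calc _ = ∫ x, (σ * (A - Real.eulerMascheroniConstant) * locScaleGumbelPdf (σ * A) σ x
        - σ * (min (Real.log (gumbelToExp (σ * A) σ x))
          (-(c / σ + Real.eulerMascheroniConstant - A)) * locScaleGumbelPdf (σ * A) σ x)) := by
        refine integral_congr_ae (.of_forall fun x => ?_)
        simp only [ENNReal.toReal_ofReal (locScaleGumbelPdf_nonneg hσ _ x), smul_eq_mul]
        rw [max_eq_min_log_gumbelToExp hσ c A x]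
        ring
    _ = _ := by
        have hE := integral_min_log_mul_exp_neg_Ioi
          (Real.exp_pos (-(c / σ + Real.eulerMascheroniConstant - A)))
        rw [Real.log_exp] at hE
        rw [integral_sub ((integrable_locScaleGumbelPdf hσ _).const_mul _) (hmin.const_mul _),
          integral_const_mul, integral_const_mul, hone, integral_comp_gumbelToExp hσ (σ * A)
            fun t => min (Real.log t) (-(c / σ + Real.eulerMascheroniConstant - A)), hE]
        ring

theorem sup'_univ_fin_succ_cases {J : ℕ} [Nonempty (Fin J)] (v : Fin (J + 1) → ℝ)
    (z : Fin J → ℝ) :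
    (Finset.univ.sup' Finset.univ_nonempty fun j : Fin (J + 1) =>
        v j + Fin.cases (motive := fun _ => ℝ) 0 z j) =
      max (v 0) (Finset.univ.sup' Finset.univ_nonempty fun j => v j.succ + z j) := by
  refine eq_of_forall_ge_iff fun c => ?_
  simp [Fin.forall_fin_succ]

section Component

variable {J : ℕ} [Nonempty (Fin J)] (v : Fin (J + 1) → ℝ) (μ : Fin J → ℝ) {σ : ℝ}

theorem integrable_emax_mul_mGumbelPdf (hσ : 0 < σ) :
    Integrable fun z : Fin J → ℝ =>
      (Finset.univ.sup' Finset.univ_nonempty fun j : Fin (J + 1) =>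
        v j + Fin.cases (motive := fun _ => ℝ) 0 z j) * mGumbelPdf μ σ z := by
  have h := integrable_max_gumbelMeasure hσ (v 0)
    (Real.log (∑ j, Real.exp ((v (Fin.succ j) + μ j) / σ)))
  rw [← map_sup'_mGumbelMeasure (fun j => v (Fin.succ j)) μ hσ, integrable_map_measure
    (by fun_prop) (measurable_sup'_add _).aemeasurable, mGumbelMeasure,
    integrable_withDensity_iff_integrable_smul'
      (continuous_mGumbelPdf _ _).measurable.ennreal_ofReal (by simp)] at h
  refine h.congr (.of_forall fun z => ?_)
  simp only [ENNReal.toReal_ofReal (mGumbelPdf_nonneg μ hσ z), smul_eq_mul, Function.comp]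
  rw [sup'_univ_fin_succ_cases, mul_comm]

theorem integral_emax_mul_mGumbelPdf (hσ : 0 < σ) :
    ∫ z : Fin J → ℝ,
      (Finset.univ.sup' Finset.univ_nonempty fun j : Fin (J + 1) =>
        v j + Fin.cases (motive := fun _ => ℝ) 0 z j) * mGumbelPdf μ σ z =
      σ * (Real.log (∑ j : Fin J, Real.exp ((v j.succ + μ j) / σ)) +
        E1 (Real.exp (-(v 0 / σ + Real.eulerMascheroniConstant -
          Real.log (∑ j : Fin J, Real.exp ((v j.succ + μ j) / σ)))))) := by
  rw [← integral_max_gumbelMeasure hσ, ← map_sup'_mGumbelMeasure (fun j => v (Fin.succ j)) μ hσ,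
    integral_map (measurable_sup'_add _).aemeasurable (by fun_prop), mGumbelMeasure,
    integral_withDensity_eq_integral_toReal_smul
      (continuous_mGumbelPdf _ _).measurable.ennreal_ofReal (by simp)]
  refine integral_congr_ae (.of_forall fun z => ?_)
  simp only [ENNReal.toReal_ofReal (mGumbelPdf_nonneg μ hσ z), smul_eq_mul]
  rw [sup'_univ_fin_succ_cases, mul_comm]

end Component

/-- Emax formula under a finite location-scale mixture of Gumbels. -/
theorem emax_of_gumbel_mixture
    (J m : ℕ) (hJ : 1 ≤ J) (hm : 1 ≤ m)
    (v : Fin (J + 1) → ℝ)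
    (ω : Fin m → ℝ) (μ : Fin m → Fin J → ℝ) (σ : Fin m → ℝ)
    (hω : ∀ k, 0 < ω k) (hωsum : ∑ k, ω k = 1) (hσ : ∀ k, 0 < σ k)
    (A a : Fin m → ℝ)
    (hA : ∀ k, A k = Real.log (∑ j : Fin J, Real.exp ((v j.succ + μ k j) / σ k)))
    (ha : ∀ k, a k = v 0 / σ k + Real.eulerMascheroniConstant - A k) :
    ∫ z : Fin J → ℝ,
        (Finset.univ.sup' Finset.univ_nonempty
          (fun j : Fin (J + 1) => v j + Fin.cases 0 z j)) *
          (∑ k, ω k * mGumbelPdf (μ k) (σ k) z) =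
      ∑ k, ω k * σ k * (A k + E1 (Real.exp (-a k))) := by
  have : Nonempty (Fin J) := ⟨⟨0, hJ⟩⟩
  simp only [Finset.mul_sum, mul_left_comm _ (ω _)]
  rw [integral_finsetSum _ fun k _ =>
    (integrable_emax_mul_mGumbelPdf v (μ k) (hσ k)).const_mul (ω k)]
  refine Finset.sum_congr rfl fun k _ => ?_
  rw [integral_const_mul, integral_emax_mul_mGumbelPdf v (μ k) (hσ k), ha, hA, mul_assoc]
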